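/- arXiv:2512.14378 — 3 statements merged into one kernel-verified Lean document; each statement's English description precedes it below -/
import Mathlib

section
/- Let n ≥ 8 be divisible by 4, let H be a saturated orthogonal array OA(n,n−1,2,2), and let one fixed column of H be removed. Then the sum of J₄(S)² over all unordered 4-subsets S of the remaining n−2 columns equals n²(n−2)(n−4)(n−5)/24. -/
open Finset

lemma aux_e_succ {α : Type*} [DecidableEq α] (x : α → ℤ) (a : α) (s : Finset α) (ha : a ∉ s) (k : ℕ) :
    ∑ S ∈ (insert a s).powersetCard (k+1), ∏ j ∈ S, x j
      = ∑ S ∈ s.powersetCard (k+1), ∏ j ∈ S, x j + x a * ∑ S ∈ s.powersetCard k, ∏ j ∈ S, x j := by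
  rw [Finset.powersetCard_succ_insert ha, Finset.sum_union, Finset.sum_image, Finset.mul_sum]
  · congr 1
    apply Finset.sum_congr rfl
    intro S hS
    rw [Finset.prod_insert]
    exact fun h => ha ((Finset.mem_powersetCard.1 hS).1 h)
  · intro S hS T hT h
    have h1 : a ∉ S := fun h => ha ((Finset.mem_powersetCard.1 hS).1 h)
    have h2 : a ∉ T := fun h => ha ((Finset.mem_powersetCard.1 hT).1 h)
    rw [← Finset.erase_insert h1, ← Finset.erase_insert h2]
    exact congrArg (fun U => Finset.erase U a) h
  · rw [Finset.disjoint_left]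
    intro S hS hS'
    obtain ⟨T, _, rfl⟩ := Finset.mem_image.1 hS'
    exact ha ((Finset.mem_powersetCard.1 hS).1 (Finset.mem_insert_self a T))

lemma aux_e4 {α : Type*} [DecidableEq α] (x : α → ℤ) (hx : ∀ j, x j ^ 2 = 1) (s : Finset α) :
    (∑ S ∈ s.powersetCard 1, ∏ j ∈ S, x j = ∑ j ∈ s, x j) ∧
    (2 * ∑ S ∈ s.powersetCard 2, ∏ j ∈ S, x j = (∑ j ∈ s, x j) ^ 2 - #s) ∧
    (6 * ∑ S ∈ s.powersetCard 3, ∏ j ∈ S, x j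
      = (∑ j ∈ s, x j) ^ 3 - 3 * #s * (∑ j ∈ s, x j) + 2 * ∑ j ∈ s, x j) ∧
    (24 * ∑ S ∈ s.powersetCard 4, ∏ j ∈ S, x j
      = (∑ j ∈ s, x j) ^ 4 - 6 * #s * (∑ j ∈ s, x j)^2 + 3 * (#s:ℤ)^2
        + 8 * (∑ j ∈ s, x j)^2 - 6 * #s) := by
  induction s using Finset.induction_on with
  | empty => 
    have h : ∀ k, Finset.powersetCard (k+1) (∅ : Finset α) = ∅ := fun k => by
      apply Finset.powersetCard_eq_empty.2; simp
    rw [h 0, h 1, h 2, h 3]; simp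
  | insert a s ha ih =>
    obtain ⟨h1, h2, h3, h4⟩ := ih
    have e1 := aux_e_succ x a s ha 0
    have e2 := aux_e_succ x a s ha 1
    have e3 := aux_e_succ x a s ha 2
    have e4 := aux_e_succ x a s ha 3
    simp only [Nat.reduceAdd, zero_add, Finset.powersetCard_zero, Finset.sum_singleton,
      Finset.prod_empty] at e1 e2 e3 e4
    rw [e1, e2, e3, e4, Finset.sum_insert ha, Finset.card_insert_of_notMem ha]
    have hxa := hx a
    push_cast
    generalize ∑ j ∈ s, x j = p at *
    generalize (#s : ℤ) = m at *
    generalize x a = y at *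
    refine ⟨?_, ?_, ?_, ?_⟩
    · linear_combination h1
    · linear_combination h2 + 2 * y * h1 - hxa
    · linear_combination h3 + 3 * y * h2 - (3 * p + y - 3*y +3*y) * hxa
    · linear_combination h4 + 4 * y * h3 - (y^2 + 4*p*y + 6 *p^2 - 6 * m + 3) * hxa

lemma aux_row (n : ℕ) (hn : 8 ≤ n)
    (H : Fin n → Fin (n - 1) → ℤ)
    (hpm : ∀ i j, H i j = 1 ∨ H i j = -1)
    (hbal : ∀ j, ∑ i : Fin n, H i j = 0)
    (horth : ∀ j k : Fin (n - 1), j ≠ k → ∑ i : Fin n, H i j * H i k = 0)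
    (i k : Fin n) (hik : i ≠ k) : ∑ j, H i j * H k j = -1 := by
  obtain ⟨M, hM0, hM1⟩ : ∃ M : Matrix (Fin n) (Option (Fin (n-1))) ℚ,
      (∀ i, M i none = 1) ∧ ∀ i j, M i (some j) = (H i j : ℚ) :=
    ⟨Matrix.of fun i o => o.elim 1 (fun j => (H i j : ℚ)), fun _ => rfl, fun _ _ => rfl⟩
  have hn0 : (n : ℚ) ≠ 0 := by positivity
  have h1 : ((n : ℚ)⁻¹ • M.transpose) * M = 1 := by
    ext a b
    rw [Matrix.smul_mul, Matrix.smul_apply, Matrix.mul_apply]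
    rcases a with _ | a <;> rcases b with _ | b
    · simp [hM0, hn0]
    · have := hbal b
      simp only [Matrix.transpose_apply, hM0, hM1, one_mul]
      rw [Matrix.one_apply_ne (by simp)]
      rw [← Int.cast_sum, this]; simp
    · have := hbal a
      simp only [Matrix.transpose_apply, hM0, hM1, mul_one]
      rw [Matrix.one_apply_ne (by simp)]
      rw [← Int.cast_sum, this]; simp
    · simp only [Matrix.transpose_apply, hM0, hM1]
      by_cases hab : a = b
      · subst hab
        have : ∀ i, (H i a : ℚ) * H i a = 1 := by
          intro i; rcases hpm i a with h | h <;> simp [h]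
        simp [this, hn0]
      · rw [Matrix.one_apply_ne (by simpa using hab)]
        have := horth a b hab
        have h2 : ∑ i, (H i a : ℚ) * H i b = 0 := by exact_mod_cast this
        rw [h2]; simp
  have h2 : M * ((n : ℚ)⁻¹ • M.transpose) = 1 := by
    refine (Matrix.mul_eq_one_comm_of_equiv (Fintype.equivOfCardEq ?_)).1 h1
    simp; omega
  have h3 := congrFun (congrFun h2 i) k
  rw [Matrix.mul_smul, Matrix.smul_apply, Matrix.mul_apply, Matrix.one_apply_ne hik] at h3
  simp only [smul_eq_mul, mul_eq_zero, inv_eq_zero, hn0, false_or, Fintype.sum_option,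
    Matrix.transpose_apply, hM0, hM1] at h3
  have h4 : (1:ℤ) * 1 + ∑ j, H i j * H k j = 0 := by exact_mod_cast h3
  linarith

/-- Deleting one fixed column from a saturated `OA(n, n-1, 2, 2)`,
the sum of `J₄(S)²` over all unordered 4-subsets of the remaining `n-2` columns
equals `n²(n-2)(n-4)(n-5)/24`. -/
theorem sum_J4_sq_delete_one (n : ℕ) (hn : 8 ≤ n) (h4 : 4 ∣ n)
    (H : Fin n → Fin (n - 1) → ℤ)
    (hpm : ∀ i j, H i j = 1 ∨ H i j = -1)
    (hbal : ∀ j, ∑ i : Fin n, H i j = 0)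
    (horth : ∀ j k : Fin (n - 1), j ≠ k → ∑ i : Fin n, H i j * H i k = 0)
    (cdel : Fin (n - 1)) :
    ∑ S ∈ ((Finset.univ : Finset (Fin (n - 1))).erase cdel).powersetCard 4,
        (∑ i : Fin n, ∏ j ∈ S, H i j) ^ 2
      = (n : ℤ) ^ 2 * ((n : ℤ) - 2) * ((n : ℤ) - 4) * ((n : ℤ) - 5) / 24 := by
  have hsq : ∀ i j, H i j ^ 2 = 1 := by
    intro i j; rcases hpm i j with h | h <;> simp [h]
  set s := (Finset.univ : Finset (Fin (n - 1))).erase cdel with hs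
  have hcard : (#s : ℤ) = n - 2 := by
    rw [hs, Finset.card_erase_of_mem (Finset.mem_univ _)]
    simp; omega
  have key : ∑ S ∈ s.powersetCard 4, (∑ i : Fin n, ∏ j ∈ S, H i j) ^ 2
      = ∑ i, ∑ k, ∑ S ∈ s.powersetCard 4, ∏ j ∈ S, (H i j * H k j) := by
    simp_rw [sq, Finset.sum_mul_sum, ← Finset.prod_mul_distrib]
    rw [Finset.sum_comm]
    exact Finset.sum_congr rfl fun i _ => Finset.sum_comm
  have hterm : ∀ i k, 24 * ∑ S ∈ s.powersetCard 4, ∏ j ∈ S, (H i j * H k j)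
      = (3 * (n-2:ℤ)^2 - 18 * (n-2) + 24) + (24 - 12 * (n-2:ℤ)) * (H i cdel * H k cdel)
        + if i = k then ((n-2:ℤ) * (n-3) * (n-4) * (n-5)
          - (3 * (n-2:ℤ)^2 - 18 * (n-2) + 24) - (24 - 12 * (n-2:ℤ))) else 0 := by
    intro i k
    have hx : ∀ j, (H i j * H k j) ^ 2 = 1 := by
      intro j; rw [mul_pow, hsq, hsq, one_mul]
    rw [(aux_e4 (fun j => H i j * H k j) hx s).2.2.2, hcard]
    have hsum := Finset.add_sum_erase Finset.univ (fun j => H i j * H k j) (Finset.mem_univ cdel)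
    rw [← hs] at hsum
    have hc := hx cdel
    split_ifs with hik
    · subst hik
      have hp : ∑ j ∈ s, H i j * H i j = n - 2 := by
        simp_rw [← sq, hsq]; simp [hcard]
      have hc1 : H i cdel * H i cdel = 1 := by rw [← sq, hsq]
      rw [hp, hc1]; ring
    · have hr := aux_row n hn H hpm hbal horth i k hik
      simp only [hr] at hsum
      have hp : ∑ j ∈ s, H i j * H k j = -1 - H i cdel * H k cdel := by linarith
      rw [hp]
      generalize H i cdel * H k cdel = y at *
      have h2 : (-1 - y)^2 = 2 + 2 * y := by linear_combination hc
      have h4 : (-1 - y)^4 = 8 + 8 * y := by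
        linear_combination (y^2 + 4 * y + 7) * hc
      rw [h2, h4]; ring
  have hzero : ∑ i, ∑ k, H i cdel * H k cdel = 0 := by
    rw [← Finset.sum_mul_sum, hbal]; simp
  symm
  apply Int.ediv_eq_of_eq_mul_right (by norm_num)
  rw [key, Finset.mul_sum]
  have hrow : ∀ i, 24 * ∑ k, ∑ S ∈ s.powersetCard 4, ∏ j ∈ S, (H i j * H k j) = _ :=
    fun i => (Finset.mul_sum _ _ _).trans (Finset.sum_congr rfl fun k _ => hterm i k)
  rw [Finset.sum_congr rfl fun i _ => hrow i]
  simp_rw [Finset.sum_add_distrib, ← Finset.mul_sum]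
  rw [← Finset.sum_mul, hbal]
  simp
  ring
end

section
/- Let n ≥ 8 be divisible by 4, let H be a saturated orthogonal array OA(n,n−1,2,2), and let two distinct fixed columns of H be removed. Then the sum of J₄(S)² over all unordered 4-subsets S of the remaining n−3 columns equals n²(n−4)(n−5)(n−6)/24. -/
open Finset

lemma esymm_pm {α : Type*} [DecidableEq α] (x : α → ℤ) (hx : ∀ j, x j * x j = 1) (T : Finset α) :
    (∑ S ∈ T.powersetCard 1, ∏ j ∈ S, x j = ∑ j ∈ T, x j) ∧
    (2 * ∑ S ∈ T.powersetCard 2, ∏ j ∈ S, x j = (∑ j ∈ T, x j) ^ 2 - (#T : ℤ)) ∧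
    (6 * ∑ S ∈ T.powersetCard 3, ∏ j ∈ S, x j
      = (∑ j ∈ T, x j) ^ 3 - 3 * (#T : ℤ) * (∑ j ∈ T, x j) + 2 * (∑ j ∈ T, x j)) ∧
    (24 * ∑ S ∈ T.powersetCard 4, ∏ j ∈ S, x j
      = (∑ j ∈ T, x j) ^ 4 - 6 * (#T : ℤ) * (∑ j ∈ T, x j) ^ 2 + 3 * (#T : ℤ) ^ 2
        + 8 * (∑ j ∈ T, x j) ^ 2 - 6 * (#T : ℤ)) := by
  induction T using Finset.induction_on with
  | empty => refine ⟨?_, ?_, ?_, ?_⟩ <;> rw [Finset.powersetCard_eq_empty.2 (by simp)] <;> simp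
  | insert c T hc ih =>
    have key : ∀ k, ∑ S ∈ (insert c T).powersetCard (k + 1), ∏ j ∈ S, x j
        = ∑ S ∈ T.powersetCard (k + 1), ∏ j ∈ S, x j
          + x c * ∑ S ∈ T.powersetCard k, ∏ j ∈ S, x j := by
      intro k
      have hmem : ∀ S ∈ T.powersetCard k, c ∉ S := fun S hS h =>
        hc ((Finset.mem_powersetCard.1 hS).1 h)
      rw [Finset.powersetCard_succ_insert hc, Finset.sum_union, Finset.sum_image, Finset.mul_sum]
      · congr 1
        exact Finset.sum_congr rfl fun S hS => Finset.prod_insert (hmem S hS)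
      · intro S hS S' hS' h
        have := congrArg (fun U => Finset.erase U c) h
        simpa [Finset.erase_insert (hmem S hS), Finset.erase_insert (hmem S' hS')] using this
      · rw [Finset.disjoint_left]
        intro S hS hS'
        obtain ⟨U, _, rfl⟩ := Finset.mem_image.1 hS'
        exact hc ((Finset.mem_powersetCard.1 hS).1 (Finset.mem_insert_self _ _))
    obtain ⟨h1, h2, h3, h4⟩ := ih
    have k0 := key 0
    have k1 := key 1
    have k2 := key 2
    have k3 := key 3
    simp only [Nat.reduceAdd, zero_add] at k0 k1 k2 k3
    rw [k0, k1, k2, k3, Finset.sum_insert hc, Finset.card_insert_of_notMem hc]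
    have hy := hx c
    generalize x c = y at *
    push_cast
    generalize (∑ j ∈ T, x j) = p at *
    generalize (#T : ℤ) = m at *
    have hy2 : y ^ 2 = 1 := by rw [sq, hy]
    have hy3 : y ^ 3 = y := by rw [pow_succ, hy2, one_mul]
    have hy4 : y ^ 4 = 1 := by rw [pow_succ, hy3, hy]
    refine ⟨?_, ?_, ?_, ?_⟩
    · rw [h1]; simp; ring
    · linear_combination h2 + 2 * y * h1 - hy2
    · linear_combination h3 + 3 * y * h2 - 3 * p * hy2 - hy3
    · linear_combination h4 + 4 * y * h3 - 6 * p ^ 2 * hy2 - 4 * p * hy3 - hy4 + (6 * m + 6 - 8) * hy2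

lemma row_orth (n : ℕ) (hn : 8 ≤ n)
    (H : Fin n → Fin (n - 1) → ℤ)
    (hpm : ∀ i j, H i j = 1 ∨ H i j = -1)
    (hbal : ∀ j, ∑ i : Fin n, H i j = 0)
    (horth : ∀ j k : Fin (n - 1), j ≠ k → ∑ i : Fin n, H i j * H i k = 0)
    (i k : Fin n) : 1 + ∑ j, H i j * H k j = if i = k then (n : ℤ) else 0 := by
  obtain ⟨M, hM0, hM1⟩ : ∃ M : Matrix (Fin n) (Option (Fin (n - 1))) ℚ,
      (∀ i, M i none = 1) ∧ ∀ i j, M i (some j) = (H i j : ℚ) :=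
    ⟨fun i o => o.elim 1 (fun j => (H i j : ℚ)), fun _ => rfl, fun _ _ => rfl⟩
  have hn0 : (n : ℚ) ≠ 0 := by positivity
  have hsq : ∀ i j, H i j * H i j = 1 := fun i j => by rcases hpm i j with h | h <;> simp [h]
  have h1 : ((n : ℚ)⁻¹ • M.transpose) * M = 1 := by
    ext o o'
    rw [Matrix.smul_mul, Matrix.smul_apply, Matrix.mul_apply]
    have hb : ∀ j, ∑ i : Fin n, (H i j : ℚ) = 0 := fun j => by exact_mod_cast hbal j
    rcases o with _ | j <;> rcases o' with _ | j'
    · simp [hM0, hM1, hn0]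
    · simp [hM0, hM1, hb, Matrix.one_apply]
    · simp [hM0, hM1, hb, Matrix.one_apply]
    · by_cases h : j = j'
      · subst h
        have : ∀ i, (H i j : ℚ) * H i j = 1 := fun i => by exact_mod_cast hsq i j
        simp [hM0, hM1, this, hn0]
      · have : ∑ i, (H i j : ℚ) * H i j' = 0 := by exact_mod_cast horth j j' h
        simp [hM0, hM1, this, Matrix.one_apply, h]
  have h2 : M * ((n : ℚ)⁻¹ • M.transpose) = 1 :=
    (Matrix.mul_eq_one_comm_of_card_eq _ _ _ (by simp; omega)).1 h1
  have h3 := congrFun (congrFun h2 i) k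
  rw [Matrix.mul_smul, Matrix.smul_apply, Matrix.mul_apply, Fintype.sum_option,
    Matrix.one_apply, smul_eq_mul, inv_mul_eq_iff_eq_mul₀ hn0] at h3
  simp only [hM0, hM1, Matrix.transpose_apply] at h3
  split_ifs at h3 ⊢ <;> · simp at h3; exact_mod_cast h3

/-- Deleting two distinct fixed columns from a saturated `OA(n, n-1, 2, 2)`,
the sum of `J₄(S)²` over all unordered 4-subsets of the remaining `n-3` columns
equals `n²(n-4)(n-5)(n-6)/24`. -/
theorem sum_J4_sq_delete_two (n : ℕ) (hn : 8 ≤ n) (h4 : 4 ∣ n)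
    (H : Fin n → Fin (n - 1) → ℤ)
    (hpm : ∀ i j, H i j = 1 ∨ H i j = -1)
    (hbal : ∀ j, ∑ i : Fin n, H i j = 0)
    (horth : ∀ j k : Fin (n - 1), j ≠ k → ∑ i : Fin n, H i j * H i k = 0)
    (a b : Fin (n - 1)) (hab : a ≠ b) :
    ∑ S ∈ ((Finset.univ : Finset (Fin (n - 1))) \ {a, b}).powersetCard 4,
        (∑ i : Fin n, ∏ j ∈ S, H i j) ^ 2
      = (n : ℤ) ^ 2 * ((n : ℤ) - 4) * ((n : ℤ) - 5) * ((n : ℤ) - 6) / 24 := by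
  have hsq : ∀ i j, H i j * H i j = 1 := fun i j => by rcases hpm i j with h | h <;> simp [h]
  set T := ((Finset.univ : Finset (Fin (n - 1))) \ {a, b}) with hT
  have hcard : (#T : ℤ) = n - 3 := by
    have : #T = n - 3 := by
      rw [hT, Finset.card_sdiff_of_subset (Finset.subset_univ _), Finset.card_pair hab]
      simp; omega
    rw [this]; omega
  have hswap : ∑ S ∈ T.powersetCard 4, (∑ i : Fin n, ∏ j ∈ S, H i j) ^ 2
      = ∑ i, ∑ k, ∑ S ∈ T.powersetCard 4, ∏ j ∈ S, (H i j * H k j) := by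
    simp_rw [sq, Finset.sum_mul_sum, ← Finset.prod_mul_distrib]
    rw [Finset.sum_comm]
    exact Finset.sum_congr rfl fun i _ => Finset.sum_comm
  have hpt : ∀ i k, 24 * ∑ S ∈ T.powersetCard 4, ∏ j ∈ S, (H i j * H k j)
      = 3 * ((n : ℤ) - 4) * (n - 6)
        + (-12 * ((n : ℤ) - 6)) * (1 + H i a * H k a + H i b * H k b
            + (H i a * H i b) * (H k a * H k b))
        + if i = k then ((n : ℤ) - 3) * (n - 4) * (n - 5) * (n - 6)
            - 3 * ((n : ℤ) - 4) * (n - 6) + 48 * (n - 6) else 0 := by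
    intro i k
    have he := (esymm_pm (fun j => H i j * H k j)
      (fun j => by rw [mul_mul_mul_comm, hsq, hsq, one_mul]) T).2.2.2
    have hr := row_orth n hn H hpm hbal horth i k
    have hs : ∑ j ∈ T, H i j * H k j + (H i a * H k a + H i b * H k b)
        = ∑ j, H i j * H k j := by
      rw [← Finset.sum_pair (f := fun j => H i j * H k j) hab, hT]
      exact Finset.sum_sdiff (Finset.subset_univ _)
    rw [he, hcard]
    by_cases hik : i = k
    · subst hik
      simp only [if_true] at hr ⊢
      have hp : ∑ j ∈ T, H i j * H i j = n - 3 := by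
        rw [hsq, hsq] at hs; linarith
      rw [hp]
      have : H i a * H i b * (H i a * H i b) = 1 := by rw [mul_mul_mul_comm, hsq, hsq, one_mul]
      rw [this, hsq, hsq]; ring
    · simp only [if_neg hik] at hr ⊢
      have hp : ∑ j ∈ T, H i j * H k j = -1 - H i a * H k a - H i b * H k b := by linarith
      rw [hp]
      rcases hpm i a with h1 | h1 <;> rcases hpm k a with h2 | h2 <;>
      rcases hpm i b with h3 | h3 <;> rcases hpm k b with h5 | h5 <;>
      · rw [h1, h2, h3, h5]; ring
  have hz : ∀ f : Fin n → ℤ, ∑ i, f i = 0 → ∑ i, ∑ k, f i * f k = 0 := by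
    intro f hf
    rw [← Finset.sum_mul_sum, hf, zero_mul]
  have hfin : 24 * ∑ S ∈ T.powersetCard 4, (∑ i : Fin n, ∏ j ∈ S, H i j) ^ 2
      = (n : ℤ) ^ 2 * ((n : ℤ) - 4) * ((n : ℤ) - 5) * ((n : ℤ) - 6) := by
    rw [hswap, Finset.mul_sum]
    simp_rw [Finset.mul_sum (s := (Finset.univ : Finset (Fin n))), hpt]
    simp_rw [Finset.sum_add_distrib, ← Finset.mul_sum, Finset.sum_add_distrib]
    rw [hz _ (hbal a), hz _ (hbal b), hz (fun i => H i a * H i b) (horth a b hab)]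
    simp
    ring
  rw [← hfin]
  simp
end

section
/- Let n ≥ 8 be divisible by 4, let H be a saturated orthogonal array OA(n,n−1,2,2), and let H' be the n×(n−2) design obtained from H by deleting one fixed column. Let X₀ be the n × ((n−2)(n−1)/2) design whose columns are the n−2 columns of H' together with the interaction columns of all unordered pairs of distinct columns of H', and let X be obtained from X₀ by deleting any single column (either a column of H' or an interaction column). Then E(s²)(X) = n(n−4)/(n−3), and X is E(s²)-optimal: E(s²)(X) ≤ E(s²)(Y) for every n × ((n−2)(n−1)/2 − 1) balanced two-level design Y. -/
open Finset

/-- The `E(s²)` value of an `n × m` two-level design `X` (columns indexed by `ι`,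
`m = card ι`): the average of the squared off-diagonal entries of `XᵀX`. -/
noncomputable def Es2 {n : ℕ} {ι : Type} [Fintype ι] [DecidableEq ι]
    (X : Fin n → ι → ℚ) : ℚ :=
  (∑ i : ι, ∑ j : ι, if i ≠ j then (∑ r : Fin n, X r i * X r j) ^ 2 else 0) /
    ((Fintype.card ι : ℚ) * ((Fintype.card ι : ℚ) - 1))

theorem aux_sq {n : ℕ} {ι : Type} [Fintype ι] (X : Fin n → ι → ℚ) :
    ∑ i : ι, ∑ j : ι, (∑ r : Fin n, X r i * X r j) ^ 2 =
      ∑ r : Fin n, ∑ s : Fin n, (∑ i : ι, X r i * X s i) ^ 2 := by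
  have h1 : ∀ i j : ι, (∑ r : Fin n, X r i * X r j) ^ 2 =
      ∑ r : Fin n, ∑ s : Fin n, (X r i * X r j) * (X s i * X s j) := by
    intro i j; rw [sq, Finset.sum_mul_sum]
  have h2 : ∀ r s : Fin n, (∑ i : ι, X r i * X s i) ^ 2 =
      ∑ i : ι, ∑ j : ι, (X r i * X r j) * (X s i * X s j) := by
    intro r s; rw [sq, Finset.sum_mul_sum]
    refine Finset.sum_congr rfl fun i _ => Finset.sum_congr rfl fun j _ => ?_
    ring
  simp only [h1, h2]
  calc _ = ∑ i : ι, ∑ r : Fin n, ∑ j : ι, ∑ s : Fin n, (X r i * X r j) * (X s i * X s j) := by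
        refine Finset.sum_congr rfl fun i _ => ?_
        rw [Finset.sum_comm]
    _ = ∑ r : Fin n, ∑ i : ι, ∑ j : ι, ∑ s : Fin n, (X r i * X r j) * (X s i * X s j) := by
        rw [Finset.sum_comm]
    _ = ∑ r : Fin n, ∑ i : ι, ∑ s : Fin n, ∑ j : ι, (X r i * X r j) * (X s i * X s j) := by
        refine Finset.sum_congr rfl fun r _ => Finset.sum_congr rfl fun i _ => ?_
        rw [Finset.sum_comm]
    _ = _ := by
        refine Finset.sum_congr rfl fun r _ => ?_
        rw [Finset.sum_comm]

theorem aux_num {n : ℕ} {ι : Type} [Fintype ι] [DecidableEq ι] (X : Fin n → ι → ℚ)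
    (hpm : ∀ i j, X i j = 1 ∨ X i j = -1) (hbal : ∀ j, ∑ i : Fin n, X i j = 0) (t : ℚ) :
    (∑ i : ι, ∑ j : ι, if i ≠ j then (∑ r : Fin n, X r i * X r j) ^ 2 else 0) =
      (n : ℚ) * ((Fintype.card ι : ℚ) + t) ^ 2 +
      (∑ r : Fin n, ∑ s : Fin n, if r ≠ s then ((∑ i : ι, X r i * X s i) + t) ^ 2 else 0)
      - (n : ℚ) ^ 2 * t ^ 2 - (Fintype.card ι : ℚ) * (n : ℚ) ^ 2 := by
  have hsq : ∀ i j, X i j * X i j = 1 := by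
    intro i j; rcases hpm i j with h | h <;> rw [h] <;> norm_num
  have split : ∀ {κ : Type} [Fintype κ] [DecidableEq κ] (F : κ → κ → ℚ),
      ∑ i : κ, ∑ j : κ, F i j =
        (∑ i : κ, F i i) + ∑ i : κ, ∑ j : κ, if i ≠ j then F i j else 0 := by
    intro κ _ _ F
    rw [← Finset.sum_add_distrib]
    refine Finset.sum_congr rfl fun i _ => ?_
    have : F i i = ∑ j : κ, if i = j then F i j else 0 := by simp
    rw [this, ← Finset.sum_add_distrib]
    refine Finset.sum_congr rfl fun j _ => ?_
    by_cases h : i = j <;> simp [h]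
  have e1 := split (fun i j : ι => (∑ r : Fin n, X r i * X r j) ^ 2)
  have e2 := split (fun r s : Fin n => ((∑ i : ι, X r i * X s i) + t) ^ 2)
  have e3 : ∑ r : Fin n, ∑ s : Fin n, (∑ i : ι, X r i * X s i) = 0 := by
    refine Finset.sum_eq_zero fun r _ => ?_
    rw [Finset.sum_comm]
    refine Finset.sum_eq_zero fun i _ => ?_
    rw [← Finset.mul_sum, hbal, mul_zero]
  have e4 : ∑ r : Fin n, ∑ s : Fin n, ((∑ i : ι, X r i * X s i) + t) ^ 2 =
      (∑ r : Fin n, ∑ s : Fin n, (∑ i : ι, X r i * X s i) ^ 2) +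
      2 * t * (∑ r : Fin n, ∑ s : Fin n, (∑ i : ι, X r i * X s i)) + (n : ℚ) ^ 2 * t ^ 2 := by
    simp only [add_sq, Finset.sum_add_distrib, Finset.mul_sum]
    congr 1
    · congr 1
      refine Finset.sum_congr rfl fun r _ => Finset.sum_congr rfl fun s _ => ?_
      rw [Finset.sum_mul]
      refine Finset.sum_congr rfl fun i _ => ?_
      ring
    · simp; ring
  have e5 := aux_sq X
  simp only [hsq] at e1 e2
  simp at e1 e2 e3 e4 e5 ⊢
  rw [e3] at e4
  linarith

theorem aux_odd {ι : Type} [Fintype ι] (y : ι → ℚ) (hy : ∀ i, y i = 1 ∨ y i = -1)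
    (t l : ℤ) (h : (Fintype.card ι : ℤ) + t = 2 * l + 1) : 1 ≤ ((∑ i, y i) + (t : ℚ)) ^ 2 := by
  have : ∀ i, ∃ b : ℤ, y i = 1 - 2 * (b : ℚ) := by
    intro i
    rcases hy i with h | h
    · exact ⟨0, by rw [h]; norm_num⟩
    · exact ⟨1, by rw [h]; norm_num⟩
  choose b hb using this
  have h' : (Fintype.card ι : ℚ) + t = 2 * l + 1 := by exact_mod_cast h
  have : (∑ i, y i) + (t : ℚ) = ((2 * (l - ∑ i, b i) + 1 : ℤ) : ℚ) := by
    simp only [hb, Finset.sum_sub_distrib, ← Finset.mul_sum]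
    push_cast
    simp
    linarith
  rw [this]
  have h3 : (1 : ℤ) ≤ (2 * (l - ∑ i, b i) + 1) ^ 2 := by
    have : (2 * (l - ∑ i, b i) + 1) ≠ 0 := by omega
    have := sq_pos_of_ne_zero (R := ℤ) this
    omega
  exact_mod_cast h3

theorem aux_pairs {k : ℕ} (c : Fin k) (f : Fin k → ℚ) :
    2 * (∑ p : {p : {j : Fin k // j ≠ c} × {j : Fin k // j ≠ c} // p.1.1 < p.2.1},
      f p.1.1.1 * f p.1.2.1) + ∑ j : {j : Fin k // j ≠ c}, f j.1 ^ 2 =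
      (∑ j : {j : Fin k // j ≠ c}, f j.1) ^ 2 := by
  have h1 : (∑ p : {p : {j : Fin k // j ≠ c} × {j : Fin k // j ≠ c} // p.1.1 < p.2.1},
      f p.1.1.1 * f p.1.2.1) =
      ∑ i : {j : Fin k // j ≠ c}, ∑ j : {j : Fin k // j ≠ c},
        if i.1 < j.1 then f i.1 * f j.1 else 0 := by
    rw [← Fintype.sum_prod_type' (f := fun (i j : {j : Fin k // j ≠ c}) =>
      if i.1 < j.1 then f i.1 * f j.1 else 0), ← Finset.sum_filter]
    symm
    apply Finset.sum_subtype (p := fun p : {j : Fin k // j ≠ c} × {j : Fin k // j ≠ c} =>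
      p.1.1 < p.2.1) (f := fun p => f p.1.1 * f p.2.1)
    simp
  have h2 : (∑ i : {j : Fin k // j ≠ c}, ∑ j : {j : Fin k // j ≠ c},
        if i.1 < j.1 then f i.1 * f j.1 else 0) =
      ∑ i : {j : Fin k // j ≠ c}, ∑ j : {j : Fin k // j ≠ c},
        if j.1 < i.1 then f i.1 * f j.1 else 0 := by
    rw [Finset.sum_comm]
    refine Finset.sum_congr rfl fun i _ => Finset.sum_congr rfl fun j _ => ?_
    rw [mul_comm]
  have h3 : ∑ j : {j : Fin k // j ≠ c}, f j.1 ^ 2 =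
      ∑ i : {j : Fin k // j ≠ c}, ∑ j : {j : Fin k // j ≠ c},
        if i = j then f i.1 * f j.1 else 0 := by
    simp [sq]
  rw [sq, Finset.sum_mul_sum, two_mul, h1]
  nth_rewrite 2 [h2]
  rw [h3, ← Finset.sum_add_distrib, ← Finset.sum_add_distrib]
  refine Finset.sum_congr rfl fun i _ => ?_
  rw [← Finset.sum_add_distrib, ← Finset.sum_add_distrib]
  refine Finset.sum_congr rfl fun j _ => ?_
  rcases lt_trichotomy i.1 j.1 with h | h | h
  · have : i ≠ j := fun e => h.ne (congrArg _ e)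
    simp [h, h.not_gt, this]
  · have : i = j := Subtype.ext h
    simp [this]
  · have : i ≠ j := fun e => h.ne' (congrArg _ e)
    simp [h, h.not_gt, this]

theorem aux_rows (n : ℕ) (hn : 8 ≤ n)
    (H : Fin n → Fin (n - 1) → ℚ)
    (hpm : ∀ i j, H i j = 1 ∨ H i j = -1)
    (hbal : ∀ j, ∑ i : Fin n, H i j = 0)
    (horth : ∀ j k : Fin (n - 1), j ≠ k → ∑ i : Fin n, H i j * H i k = 0)
    (r s : Fin n) (hrs : r ≠ s) : ∑ j, H r j * H s j = -1 := by
  have hn0 : (n : ℚ) ≠ 0 := by positivity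
  have hsq : ∀ i j, H i j * H i j = 1 := by
    intro i j; rcases hpm i j with h | h <;> rw [h] <;> norm_num
  let M : Matrix (Fin n) (Option (Fin (n - 1))) ℚ := fun i o => o.elim 1 (H i)
  let N : Matrix (Option (Fin (n - 1))) (Fin n) ℚ := fun o i => (n : ℚ)⁻¹ * o.elim 1 (H i)
  have hNM : N * M = 1 := by
    ext a b
    rw [Matrix.mul_apply]
    rcases a with _ | a <;> rcases b with _ | b
    · simp [M, N, hn0]
    · simp [M, N, ← Finset.mul_sum, hbal]
    · simp [M, N, ← Finset.mul_sum, hbal]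
    · simp only [M, N, Option.elim, mul_assoc, ← Finset.mul_sum]
      by_cases h : a = b
      · subst h; simp [hsq, hn0]
      · rw [horth a b h, Matrix.one_apply_ne (by simpa using h)]; simp
  have hMN : M * N = 1 := by
    rw [Matrix.mul_eq_one_comm_of_card_eq]
    · exact hNM
    · simp; omega
  have := congrFun (congrFun hMN r) s
  rw [Matrix.mul_apply, Matrix.one_apply_ne hrs, Fintype.sum_option] at this
  have e : ∀ j, M r (some j) * N (some j) s = (n : ℚ)⁻¹ * (H r j * H s j) := by
    intro j; simp only [M, N, Option.elim]; ring
  simp only [e, ← Finset.mul_sum] at this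
  simp only [M, N, Option.elim, one_mul, mul_one, ← mul_one_add] at this
  rcases mul_eq_zero.1 (show (n : ℚ)⁻¹ * (1 + ∑ j, H r j * H s j) = 0 by linarith) with h | h
  · exact absurd h (inv_ne_zero hn0)
  · linarith

theorem aux_del {κ : Type} [Fintype κ] [DecidableEq κ] (c : κ) (g : κ → ℚ) :
    ∑ x : {x : κ // x ≠ c}, g x.1 = (∑ x, g x) - g c := by
  have h : ∑ x : {x : κ // x ≠ c}, g x.1 = ∑ x ∈ Finset.univ.erase c, g x := by
    symm
    apply Finset.sum_subtype
    simp
  rw [h, Finset.sum_erase_eq_sub (Finset.mem_univ c)]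

/-- Let `H'` be a saturated `OA(n, n-1, 2, 2)` with one fixed column
deleted. Deleting any single column (a main-effect or an interaction column) from the
`n × ((n-2)(n-1)/2)` design obtained by augmenting `H'` with all its two-column
interactions yields a design `X` with `E(s²)(X) = n(n-4)/(n-3)`, which is
`E(s²)`-optimal among all balanced `n × ((n-2)(n-1)/2 - 1)` two-level designs. -/
theorem Es2_optimal_delete_one_minus_one_col (n : ℕ) (hn : 8 ≤ n) (h4 : 4 ∣ n)
    (H : Fin n → Fin (n - 1) → ℚ)
    (hpm : ∀ i j, H i j = 1 ∨ H i j = -1)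
    (hbal : ∀ j, ∑ i : Fin n, H i j = 0)
    (horth : ∀ j k : Fin (n - 1), j ≠ k → ∑ i : Fin n, H i j * H i k = 0)
    (cdel : Fin (n - 1))
    (c0 : {j : Fin (n - 1) // j ≠ cdel} ⊕
      {p : {j : Fin (n - 1) // j ≠ cdel} × {j : Fin (n - 1) // j ≠ cdel} //
        p.1.1 < p.2.1})
    (X : Fin n → {c : {j : Fin (n - 1) // j ≠ cdel} ⊕
      {p : {j : Fin (n - 1) // j ≠ cdel} × {j : Fin (n - 1) // j ≠ cdel} //
        p.1.1 < p.2.1} // c ≠ c0} → ℚ)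
    (hX : ∀ r c, X r c =
      Sum.elim (fun j => H r j.1) (fun p => H r p.1.1.1 * H r p.1.2.1) c.1) :
    Es2 X = (n : ℚ) * ((n : ℚ) - 4) / ((n : ℚ) - 3) ∧
      ∀ Y : Fin n → Fin ((n - 2) * (n - 1) / 2 - 1) → ℚ,
        (∀ i j, Y i j = 1 ∨ Y i j = -1) → (∀ j, ∑ i : Fin n, Y i j = 0) →
          Es2 X ≤ Es2 Y := by
  obtain ⟨q, rfl⟩ := h4
  have hq : 2 ≤ q := by omega
  have hq' : (2 : ℚ) ≤ q := by exact_mod_cast hq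
  have hsq : ∀ i j, H i j * H i j = 1 := by
    intro i j; rcases hpm i j with h | h <;> rw [h] <;> norm_num
  -- full design
  set X0 : Fin (4 * q) → ({j : Fin (4 * q - 1) // j ≠ cdel} ⊕
      {p : {j : Fin (4 * q - 1) // j ≠ cdel} × {j : Fin (4 * q - 1) // j ≠ cdel} //
        p.1.1 < p.2.1}) → ℚ := fun r c =>
      Sum.elim (fun j => H r j.1) (fun p => H r p.1.1.1 * H r p.1.2.1) c with hX0
  have pm0 : ∀ r c, X0 r c = 1 ∨ X0 r c = -1 := by
    rintro r (j | p)
    · exact hpm r j.1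
    · simp only [hX0, Sum.elim_inr]
      rcases hpm r p.1.1.1 with h | h <;> rcases hpm r p.1.2.1 with h' | h' <;>
        rw [h, h'] <;> norm_num
  have bal0 : ∀ c, ∑ r, X0 r c = 0 := by
    rintro (j | p)
    · exact hbal j.1
    · exact horth _ _ p.2.ne
  have card1 : (Fintype.card {j : Fin (4 * q - 1) // j ≠ cdel} : ℚ) = 4 * q - 2 := by
    have : Fintype.card {j : Fin (4 * q - 1) // j ≠ cdel} + 2 = 4 * q := by
      rw [Fintype.card_subtype_compl]; simp; omega
    have : (Fintype.card {j : Fin (4 * q - 1) // j ≠ cdel} : ℚ) + 2 = 4 * q := by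
      exact_mod_cast this
    linarith
  have gram : ∀ r s, ∑ c, X0 r c * X0 s c =
      (∑ j : {j : Fin (4 * q - 1) // j ≠ cdel}, H r j.1 * H s j.1) +
      ((∑ j : {j : Fin (4 * q - 1) // j ≠ cdel}, H r j.1 * H s j.1) ^ 2 - (4 * q - 2)) / 2 := by
    intro r s
    have h := aux_pairs cdel (fun j => H r j * H s j)
    have h1 : ∑ j : {j : Fin (4 * q - 1) // j ≠ cdel}, (H r j.1 * H s j.1) ^ 2 = 4 * q - 2 := by
      rw [← card1]
      have : ∀ j, (H r j * H s j) ^ 2 = 1 := by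
        intro j
        rw [show (H r j * H s j) ^ 2 = (H r j * H r j) * (H s j * H s j) by ring, hsq, hsq]
        norm_num
      simp [this]
    rw [h1] at h
    rw [Fintype.sum_sum_type]
    simp only [hX0, Sum.elim_inl, Sum.elim_inr]
    have h2 : ∀ p : {p : {j : Fin (4 * q - 1) // j ≠ cdel} ×
        {j : Fin (4 * q - 1) // j ≠ cdel} // p.1.1 < p.2.1},
        H r p.1.1.1 * H r p.1.2.1 * (H s p.1.1.1 * H s p.1.2.1) =
        H r p.1.1.1 * H s p.1.1.1 * (H r p.1.2.1 * H s p.1.2.1) := fun p => by ring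
    simp only [h2]
    linarith
  have gram_off : ∀ r s, r ≠ s → ∑ c, X0 r c * X0 s c = -(2 * q - 1) := by
    intro r s hrs
    rw [gram r s]
    have := aux_del cdel (fun j => H r j * H s j)
    rw [this, aux_rows _ hn H hpm hbal horth r s hrs]
    rcases hpm r cdel with h | h <;> rcases hpm s cdel with h' | h' <;>
        rw [h, h'] <;> ring
  have card0 : (Fintype.card ({j : Fin (4 * q - 1) // j ≠ cdel} ⊕
      {p : {j : Fin (4 * q - 1) // j ≠ cdel} × {j : Fin (4 * q - 1) // j ≠ cdel} //
        p.1.1 < p.2.1}) : ℚ) = (2 * q - 1) * (4 * q - 1) := by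
    let r : Fin (4 * q) := ⟨0, by omega⟩
    have h := gram r r
    have h1 : ∀ c, X0 r c * X0 r c = 1 := by
      intro c; rcases pm0 r c with h | h <;> rw [h] <;> norm_num
    simp only [h1, hsq, Finset.sum_const, Finset.card_univ, nsmul_eq_mul, mul_one, card1] at h
    rw [h]; ring
  have cardX : (Fintype.card {c : {j : Fin (4 * q - 1) // j ≠ cdel} ⊕
      {p : {j : Fin (4 * q - 1) // j ≠ cdel} × {j : Fin (4 * q - 1) // j ≠ cdel} //
        p.1.1 < p.2.1} // c ≠ c0} : ℚ) = (2 * q - 1) * (4 * q - 1) - 1 := by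
    have := aux_del c0 (fun _ => (1 : ℚ))
    simp only [Finset.sum_const, Finset.card_univ, nsmul_eq_mul, mul_one] at this
    rw [this, card0]
  have hXX : ∀ r c, X r c = X0 r c.1 := hX
  have gramX : ∀ r s, r ≠ s → ((∑ c, X r c * X s c) + (2 * q - 1)) ^ 2 = 1 := by
    intro r s hrs
    simp only [hXX]
    rw [aux_del c0 (fun c => X0 r c * X0 s c), gram_off r s hrs]
    rcases pm0 r c0 with h | h <;> rcases pm0 s c0 with h' | h' <;>
        rw [h, h'] <;> ring
  have numX := aux_num X (fun r c => by rw [hXX]; exact pm0 r c.1)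
    (fun c => by simp only [hXX]; exact bal0 c.1) (2 * q - 1)
  have offX : (∑ r : Fin (4 * q), ∑ s : Fin (4 * q),
      if r ≠ s then ((∑ i, X r i * X s i) + (2 * q - 1)) ^ 2 else 0) =
      ∑ r : Fin (4 * q), ∑ s : Fin (4 * q), if r ≠ s then (1 : ℚ) else 0 := by
    refine Finset.sum_congr rfl fun r _ => Finset.sum_congr rfl fun s _ => ?_
    by_cases h : r ≠ s
    · rw [if_pos h, if_pos h, gramX r s h]
    · rw [if_neg h, if_neg h]
  have cnt : (∑ r : Fin (4 * q), ∑ s : Fin (4 * q), if r ≠ s then (1 : ℚ) else 0) =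
      4 * q * (4 * q - 1) := by
    have : ∀ r : Fin (4 * q), (∑ s : Fin (4 * q), if r ≠ s then (1 : ℚ) else 0) = 4 * q - 1 := by
      intro r
      have h : ∀ s : Fin (4 * q), (if r ≠ s then (1 : ℚ) else 0) = 1 - if r = s then 1 else 0 := by
        intro s; by_cases h : r = s <;> simp [h]
      simp only [h, Finset.sum_sub_distrib]
      simp
    simp only [this]
    rw [Finset.sum_const, Finset.card_univ, Fintype.card_fin, nsmul_eq_mul]
    push_cast
    ring
  have hm : (4 * q - 2) * (4 * q - 1) / 2 - 1 + 1 = (2 * q - 1) * (4 * q - 1) := by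
    have : (4 * q - 2) * (4 * q - 1) = 2 * ((2 * q - 1) * (4 * q - 1)) := by
      rw [← mul_assoc]; congr 1; omega
    rw [this, Nat.mul_div_cancel_left _ (by norm_num)]
    have : 0 < (2 * q - 1) * (4 * q - 1) := Nat.mul_pos (by omega) (by omega)
    omega
  have hmZ : (((4 * q - 2) * (4 * q - 1) / 2 - 1 : ℕ) : ℤ) + 1 = (2 * q - 1) * (4 * q - 1) := by
    generalize (4 * q - 2) * (4 * q - 1) / 2 - 1 = m at hm
    have h1 : ((2 * q - 1 : ℕ) : ℤ) = 2 * q - 1 := by omega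
    have h2 : ((4 * q - 1 : ℕ) : ℤ) = 4 * q - 1 := by omega
    rw [← h1, ← h2]
    exact_mod_cast hm
  have hmQ : (((4 * q - 2) * (4 * q - 1) / 2 - 1 : ℕ) : ℚ) = (2 * q - 1) * (4 * q - 1) - 1 := by
    rw [eq_sub_iff_add_eq]; exact_mod_cast hmZ
  have hp : (3 : ℚ) ≤ (2 * q - 1) * (4 * q - 1) := by
    have : (3 * 1 : ℚ) ≤ (2 * q - 1) * (4 * q - 1) :=
      mul_le_mul (by linarith) (by linarith) (by norm_num) (by linarith)
    linarith
  constructor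
  · unfold Es2
    rw [numX, offX, cnt, cardX]
    push_cast
    have a1 : ((2 * q - 1) * (4 * q - 1) - 1 : ℚ) ≠ 0 := by
      apply ne_of_gt; linarith only [hp]
    have a2 : ((2 * q - 1) * (4 * q - 1) - 1 - 1 : ℚ) ≠ 0 := by
      apply ne_of_gt; linarith only [hp]
    have a3 : (4 * q - 3 : ℚ) ≠ 0 := by
      apply ne_of_gt; linarith only [hq']
    rw [div_eq_div_iff (mul_ne_zero a1 a2) a3]
    ring
  · intro Y hY hYb
    have numY := aux_num Y hY hYb (2 * q - 1)
    unfold Es2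
    rw [numX, numY, offX, cardX, Fintype.card_fin, hmQ]
    have a1 : (0 : ℚ) ≤ (2 * q - 1) * (4 * q - 1) - 1 := by linarith only [hp]
    have a2 : (0 : ℚ) ≤ (2 * q - 1) * (4 * q - 1) - 1 - 1 := by linarith only [hp]
    refine div_le_div_of_nonneg_right ?_ (mul_nonneg a1 a2)
    gcongr with r _ s _
    by_cases h : r ≠ s
    · rw [if_pos h, if_pos h]
      have := aux_odd (fun i => Y r i * Y s i) (fun i => by
        rcases hY r i with h | h <;> rcases hY s i with h' | h' <;>
          rw [h, h'] <;> norm_num) (2 * q - 1) (4 * q ^ 2 - 2 * q - 1) (by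
          rw [Fintype.card_fin, eq_sub_iff_add_eq.2 hmZ]; ring)
      push_cast at this
      exact this
    · rw [if_neg h, if_neg h]
end
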